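/- arXiv:2307.13381 — 9 statements merged into one kernel-verified Lean document; each statement's English description precedes it below -/
import Mathlib

section
/- Let E be a real inner product space and let f : E → ℝ be differentiable with gradient ∇f. Assume ∇f is L-Lipschitz (L ≥ 0), i.e. ‖∇f(x₁) − ∇f(x₂)‖ ≤ L‖x₁ − x₂‖ for all x₁, x₂ ∈ E, and that f is μ-strongly convex (μ ≥ 0), i.e. f(y) ≥ f(x) + ⟨∇f(x), y − x⟩ + (μ/2)‖y − x‖² for all x, y ∈ E. Then for all x, y, z ∈ E: ⟨∇f(x), z − y⟩ ≥ f(z) − f(y) + (μ/4)‖y − z‖² − L‖z − x‖². -/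
open scoped RealInnerProductSpace

/-!
Adding the strong convexity inequality based at `x` and evaluated at `y` to the one based at `z`
and evaluated at `x` bounds `⟪∇f(x), z - y⟫` from below, up to the error `⟪∇f(z) - ∇f(x), z - x⟫`
made by using `∇f(x)` in place of `∇f(z)`. The Lipschitz condition controls this error, and the
two quadratic terms `‖y - x‖²` and `‖x - z‖²` together dominate `‖y - z‖² / 2`.
-/

theorem norm_sub_sq_le_two_mul_add {G : Type*} [SeminormedAddCommGroup G] (x y z : G) :
    ‖y - z‖ ^ 2 ≤ 2 * (‖y - x‖ ^ 2 + ‖x - z‖ ^ 2) :=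
  calc ‖y - z‖ ^ 2
      ≤ (‖y - x‖ + ‖x - z‖) ^ 2 := by
        gcongr
        exact norm_sub_le_norm_sub_add_norm_sub y x z
    _ ≤ 2 * (‖y - x‖ ^ 2 + ‖x - z‖ ^ 2) := add_sq_le

section InnerProductSpace

variable {E : Type*} [SeminormedAddCommGroup E] [InnerProductSpace ℝ E]

theorem real_inner_le_mul_norm_sq_of_norm_le {u v : E} {L : ℝ} (h : ‖u‖ ≤ L * ‖v‖) :
    ⟪u, v⟫ ≤ L * ‖v‖ ^ 2 :=
  calc ⟪u, v⟫
      ≤ ‖u‖ * ‖v‖ := real_inner_le_norm u v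
    _ ≤ L * ‖v‖ * ‖v‖ := by gcongr
    _ = L * ‖v‖ ^ 2 := by ring

theorem sub_add_sub_inner_le_inner_of_quadratic_lower_bounds
    {f : E → ℝ} {μ : ℝ} {x y z gx gz : E}
    (hxy : f x + ⟪gx, y - x⟫ + μ / 2 * ‖y - x‖ ^ 2 ≤ f y)
    (hzx : f z + ⟪gz, x - z⟫ + μ / 2 * ‖x - z‖ ^ 2 ≤ f x) :
    f z - f y + μ / 2 * (‖y - x‖ ^ 2 + ‖x - z‖ ^ 2) - ⟪gz - gx, z - x⟫ ≤ ⟪gx, z - y⟫ := by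
  have inner_split : ⟪gx, z - y⟫ = -⟪gx, y - x⟫ - ⟪gz, x - z⟫ - ⟪gz - gx, z - x⟫ := by
    simp only [inner_sub_left, inner_sub_right]
    ring
  linarith

end InnerProductSpace

/-- Perturbed strong convexity (Lemma A.1): if `f` has `L`-Lipschitz gradient `f'`
and is `μ`-strongly convex, then for all `x, y, z`,
`⟪∇f(x), z − y⟫ ≥ f(z) − f(y) + (μ/4)‖y − z‖² − L‖z − x‖²`. -/
theorem perturbed_strong_convexity
    {E : Type*} [NormedAddCommGroup E] [InnerProductSpace ℝ E]
    (f : E → ℝ) (f' : E → E) (L μ : ℝ) (hL : 0 ≤ L) (hμ : 0 ≤ μ)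
    (hdiff : ∀ x : E, HasFDerivAt f (InnerProductSpace.toDualMap ℝ E (f' x) : E →L[ℝ] ℝ) x)
    (hLip : ∀ x₁ x₂ : E, ‖f' x₁ - f' x₂‖ ≤ L * ‖x₁ - x₂‖)
    (hsc : ∀ x y : E, f y ≥ f x + ⟪f' x, y - x⟫ + μ / 2 * ‖y - x‖ ^ 2) :
    ∀ x y z : E,
      ⟪f' x, z - y⟫ ≥ f z - f y + μ / 4 * ‖y - z‖ ^ 2 - L * ‖z - x‖ ^ 2 := by
  intro x y z
  rw [ge_iff_le]
  calc f z - f y + μ / 4 * ‖y - z‖ ^ 2 - L * ‖z - x‖ ^ 2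
      ≤ f z - f y + μ / 4 * (2 * (‖y - x‖ ^ 2 + ‖x - z‖ ^ 2)) - ⟪f' z - f' x, z - x⟫ := by
        gcongr
        · exact norm_sub_sq_le_two_mul_add x y z
        · exact real_inner_le_mul_norm_sq_of_norm_le (hLip z x)
    _ = f z - f y + μ / 2 * (‖y - x‖ ^ 2 + ‖x - z‖ ^ 2) - ⟪f' z - f' x, z - x⟫ := by ring
    _ ≤ ⟪f' x, z - y⟫ := sub_add_sub_inner_le_inner_of_quadratic_lower_bounds (hsc x y) (hsc z x)
end

section
/- Let E be a real inner product space, let f : E → ℝ be differentiable with L-Lipschitz gradient ∇f (L ≥ 0), and let x, u, c ∈ E. Let J ≥ 2 be an integer, η > 0, η_g ≥ 1, and set τ = J·η·η_g. Assume the step-size condition 4τ²L²/(η_g²·J) ≤ 1/(J−1). Define u⁺ = u − η·(∇f(u) − ∇f(x) + c). Then ‖u⁺ − x‖² ≤ (1 + 2/(J−1))·‖u − x‖² + (4τ²/(η_g²·J))·‖c‖². -/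
open scoped RealInnerProductSpace

/-! Young's inequality with weight `m = J - 1` splits off `u - x` at the price of a factor
`1 + 1 / (J - 1)`, and with weight `1` it separates the Lipschitz increment from `c`. The step-size
condition then absorbs the Lipschitz term into a second copy of `1 / (J - 1)`. -/

section

variable {E : Type*} [SeminormedAddCommGroup E]

theorem norm_add_sq_le_add_mul_sq (a b : E) {m : ℝ} (hm : 0 < m) :
    ‖a + b‖ ^ 2 ≤ (1 + 1 / m) * ‖a‖ ^ 2 + (1 + m) * ‖b‖ ^ 2 := by
  have young : 2 * ‖b‖ * ‖a‖ ≤ m * ‖b‖ ^ 2 + m⁻¹ * ‖a‖ ^ 2 := two_mul_le_add_mul_sq hm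
  calc ‖a + b‖ ^ 2
      ≤ (‖a‖ + ‖b‖) ^ 2 := by gcongr; exact norm_add_le a b
    _ = ‖a‖ ^ 2 + ‖b‖ ^ 2 + 2 * ‖b‖ * ‖a‖ := by ring
    _ ≤ ‖a‖ ^ 2 + ‖b‖ ^ 2 + (m * ‖b‖ ^ 2 + m⁻¹ * ‖a‖ ^ 2) := by gcongr
    _ = (1 + 1 / m) * ‖a‖ ^ 2 + (1 + m) * ‖b‖ ^ 2 := by ring

theorem norm_add_sq_le_of_norm_le {a : E} {r : ℝ} (ha : ‖a‖ ≤ r) (b : E) :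
    ‖a + b‖ ^ 2 ≤ 2 * r ^ 2 + 2 * ‖b‖ ^ 2 :=
  calc ‖a + b‖ ^ 2
      ≤ (1 + 1 / 1) * ‖a‖ ^ 2 + (1 + 1) * ‖b‖ ^ 2 := norm_add_sq_le_add_mul_sq a b one_pos
    _ = 2 * ‖a‖ ^ 2 + 2 * ‖b‖ ^ 2 := by norm_num
    _ ≤ 2 * r ^ 2 + 2 * ‖b‖ ^ 2 := by gcongr

variable [NormedSpace ℝ E] {G : E → E} {L : ℝ} {x u : E}

theorem norm_corrected_step_sub_sq_le (hG : ‖G u - G x‖ ≤ L * ‖u - x‖) (c : E) (η : ℝ) {m : ℝ}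
    (hm : 0 < m) :
    ‖u - η • (G u - G x + c) - x‖ ^ 2 ≤
      (1 + 1 / m + 2 * (1 + m) * η ^ 2 * L ^ 2) * ‖u - x‖ ^ 2
        + 2 * (1 + m) * η ^ 2 * ‖c‖ ^ 2 :=
  calc ‖u - η • (G u - G x + c) - x‖ ^ 2
      = ‖(u - x) + (-η) • (G u - G x + c)‖ ^ 2 := by congr 2; module
    _ ≤ (1 + 1 / m) * ‖u - x‖ ^ 2 + (1 + m) * ‖(-η) • (G u - G x + c)‖ ^ 2 :=
        norm_add_sq_le_add_mul_sq _ _ hm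
    _ = (1 + 1 / m) * ‖u - x‖ ^ 2 + (1 + m) * (η ^ 2 * ‖G u - G x + c‖ ^ 2) := by
        rw [norm_smul, norm_neg, mul_pow, Real.norm_eq_abs, sq_abs]
    _ ≤ (1 + 1 / m) * ‖u - x‖ ^ 2
          + (1 + m) * (η ^ 2 * (2 * (L * ‖u - x‖) ^ 2 + 2 * ‖c‖ ^ 2)) := by
        gcongr
        exact norm_add_sq_le_of_norm_le hG c
    _ = (1 + 1 / m + 2 * (1 + m) * η ^ 2 * L ^ 2) * ‖u - x‖ ^ 2
          + 2 * (1 + m) * η ^ 2 * ‖c‖ ^ 2 := by ring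

theorem one_step_drift_recursion_general (hG : ‖G u - G x‖ ≤ L * ‖u - x‖) (c : E)
    {J η ηg τ : ℝ} (hJ : 1 < J) (hηg : ηg ≠ 0) (hτ : τ = J * η * ηg)
    (hstep : 4 * τ ^ 2 * L ^ 2 / (ηg ^ 2 * J) ≤ 1 / (J - 1)) :
    ‖u - η • (G u - G x + c) - x‖ ^ 2 ≤
      (1 + 2 / (J - 1)) * ‖u - x‖ ^ 2 + 4 * τ ^ 2 / (ηg ^ 2 * J) * ‖c‖ ^ 2 := by
  have hJ_pos : 0 < J := one_pos.trans hJ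
  have effective_step : 4 * τ ^ 2 / (ηg ^ 2 * J) = 4 * J * η ^ 2 := by
    rw [hτ]
    field_simp
  have lipschitz_absorbed : 2 * J * η ^ 2 * L ^ 2 ≤ 1 / (J - 1) := by
    rw [mul_div_right_comm, effective_step] at hstep
    have : 0 ≤ J * η ^ 2 * L ^ 2 := by positivity
    linarith
  calc ‖u - η • (G u - G x + c) - x‖ ^ 2
      ≤ (1 + 1 / (J - 1) + 2 * J * η ^ 2 * L ^ 2) * ‖u - x‖ ^ 2 + 2 * J * η ^ 2 * ‖c‖ ^ 2 := by
        simpa only [add_sub_cancel] using norm_corrected_step_sub_sq_le hG c η (sub_pos.2 hJ)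
    _ ≤ (1 + 1 / (J - 1) + 1 / (J - 1)) * ‖u - x‖ ^ 2 + 4 * J * η ^ 2 * ‖c‖ ^ 2 := by
        gcongr
        norm_num
    _ = (1 + 2 / (J - 1)) * ‖u - x‖ ^ 2 + 4 * τ ^ 2 / (ηg ^ 2 * J) * ‖c‖ ^ 2 := by
        rw [effective_step]
        ring

end

/-- One bias-corrected local step drift recursion (inside Lemma A.2, deterministic case):
with `τ = J·η·η_g` and the step-size condition `4τ²L²/(η_g²J) ≤ 1/(J−1)`, the update
`u⁺ = u − η(∇f(u) − ∇f(x) + c)` satisfies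
`‖u⁺ − x‖² ≤ (1 + 2/(J−1))‖u − x‖² + (4τ²/(η_g²J))‖c‖²`. -/
theorem one_step_drift_recursion
    {E : Type*} [NormedAddCommGroup E] [InnerProductSpace ℝ E]
    (f : E → ℝ) (f' : E → E) (L : ℝ) (hL : 0 ≤ L)
    (hdiff : ∀ y : E, HasFDerivAt f (InnerProductSpace.toDualMap ℝ E (f' y) : E →L[ℝ] ℝ) y)
    (hLip : ∀ x₁ x₂ : E, ‖f' x₁ - f' x₂‖ ≤ L * ‖x₁ - x₂‖)
    (x u c : E) (J : ℕ) (hJ : 2 ≤ J) (η ηg τ : ℝ)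
    (hη : 0 < η) (hηg : 1 ≤ ηg) (hτ : τ = J * η * ηg)
    (hstep : 4 * τ ^ 2 * L ^ 2 / (ηg ^ 2 * J) ≤ 1 / ((J : ℝ) - 1))
    (uplus : E) (hu : uplus = u - η • (f' u - f' x + c)) :
    ‖uplus - x‖ ^ 2 ≤ (1 + 2 / ((J : ℝ) - 1)) * ‖u - x‖ ^ 2
      + 4 * τ ^ 2 / (ηg ^ 2 * J) * ‖c‖ ^ 2 := by
  subst hu
  exact one_step_drift_recursion_general (hLip u x) c (mod_cast hJ) (by positivity) hτ hstep
end

section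
/- Let E be a real inner product space, let f : E → ℝ be differentiable with L-Lipschitz gradient ∇f (L ≥ 0), and let x, c ∈ E. Let J ≥ 2 be an integer, η > 0, η_g ≥ 1, and set τ = J·η·η_g. Assume 4τ²L²/(η_g²·J) ≤ 1/(J−1). Define the local iterates by u₀ = x and u_j = u_{j−1} − η·(∇f(u_{j−1}) − ∇f(x) + c) for j = 1, …, J. Then for every j with 0 ≤ j ≤ J: ‖u_j − x‖² ≤ (16τ²/η_g²)·‖c‖². -/
open scoped RealInnerProductSpace

/-! By the Lipschitz bound, a corrected step moves the distance to the anchor `x` from `d` to at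
most `(1 + |η|L) d + |η|‖c‖`, so the discrete Grönwall inequality bounds the drift after `j ≤ J`
steps by `J |η| ‖c‖ exp (J |η| L)`. The step-size condition gives
`(J η L)² ≤ J / (4 (J - 1)) ≤ 1`, and `e ≤ 4`. -/

section CorrectedStep

variable {E : Type*} [SeminormedAddCommGroup E] [NormedSpace ℝ E]
  {g : E → E} {L : ℝ} {x : E}

/-- One bias-corrected local step of Scaff-PD from `y`, with anchor `x`, step size `η` and
correction `c`. The gradient of the local objective is replaced by an arbitrary vector field `g`. -/
def correctedStep (g : E → E) (x c : E) (η : ℝ) (y : E) : E :=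
  y - η • (g y - g x + c)

theorem norm_correctedStep_sub_le {y : E} (hLip : ‖g y - g x‖ ≤ L * ‖y - x‖) (c : E) (η : ℝ) :
    ‖correctedStep g x c η y - x‖ ≤ (1 + |η| * L) * ‖y - x‖ + |η| * ‖c‖ :=
  calc ‖correctedStep g x c η y - x‖
    _ = ‖(y - x) - η • (g y - g x + c)‖ := by rw [correctedStep, sub_right_comm]
    _ ≤ ‖y - x‖ + |η| * ‖g y - g x + c‖ := by
        simpa only [norm_smul, Real.norm_eq_abs] using norm_sub_le (y - x) (η • (g y - g x + c))
    _ ≤ ‖y - x‖ + |η| * (L * ‖y - x‖ + ‖c‖) := by gcongr; exact norm_add_le_of_le hLip le_rfl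
    _ = (1 + |η| * L) * ‖y - x‖ + |η| * ‖c‖ := by ring

theorem norm_iterate_correctedStep_sub_le (hL : 0 ≤ L)
    (hLip : ∀ y, ‖g y - g x‖ ≤ L * ‖y - x‖) (c : E) (η : ℝ) (n : ℕ) :
    ‖(correctedStep g x c η)^[n] x - x‖ ≤ n * |η| * ‖c‖ * Real.exp (n * (|η| * L)) := by
  have one_step (k : ℕ) : ‖(correctedStep g x c η)^[k + 1] x - x‖ ≤
      (1 + |η| * L) * ‖(correctedStep g x c η)^[k] x - x‖ + |η| * ‖c‖ := by
    rw [Function.iterate_succ_apply']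
    exact norm_correctedStep_sub_le (hLip _) c η
  have gronwall := discrete_gronwall (u := fun k ↦ ‖(correctedStep g x c η)^[k] x - x‖)
    (b := fun _ ↦ |η| * ‖c‖) (c := fun _ ↦ |η| * L) (norm_nonneg _)
    (fun k _ ↦ one_step k) (fun _ _ ↦ by positivity) (fun _ _ ↦ by positivity) n.zero_le
  simpa [mul_assoc] using gronwall

end CorrectedStep

theorem eq_iterate_of_forall_lt_succ_eq {α : Type*} {φ : α → α} {u : ℕ → α} {n : ℕ}
    (hu : ∀ k < n, u (k + 1) = φ (u k)) {j : ℕ} (hj : j ≤ n) : u j = φ^[j] (u 0) := by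
  induction j with
  | zero => rfl
  | succ k ih => rw [hu k hj, ih (Nat.le_of_succ_le hj), Function.iterate_succ_apply']

theorem mul_le_one_of_four_mul_mul_sq_le {t a : ℝ} (ht : 2 ≤ t)
    (h : 4 * t * a ^ 2 ≤ 1 / (t - 1)) : t * a ≤ 1 := by
  have h_mul : 4 * t * a ^ 2 * (t - 1) ≤ 1 := (le_div_iff₀ (by linarith)).mp h
  have h_sq : (t * a) ^ 2 ≤ 1 := by
    calc (t * a) ^ 2
      _ = t * a ^ 2 * t := by ring
      _ ≤ t * a ^ 2 * (4 * (t - 1)) := by gcongr; linarith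
      _ = 4 * t * a ^ 2 * (t - 1) := by ring
      _ ≤ 1 := h_mul
  exact (abs_le.mp ((sq_le_one_iff_abs_le_one _).mp h_sq)).2

theorem local_iterate_drift_bound_general
    {E : Type*} [SeminormedAddCommGroup E] [NormedSpace ℝ E] {g : E → E} {L : ℝ} (hL : 0 ≤ L)
    {x : E} (hLip : ∀ y, ‖g y - g x‖ ≤ L * ‖y - x‖) (c : E) {J : ℕ} (hJ : 2 ≤ J) {η ηg τ : ℝ}
    (hηg : ηg ≠ 0) (hτ : τ = J * η * ηg)
    (hstep : 4 * τ ^ 2 * L ^ 2 / (ηg ^ 2 * J) ≤ 1 / ((J : ℝ) - 1))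
    {u : ℕ → E} (hu0 : u 0 = x) (hrec : ∀ k < J, u (k + 1) = correctedStep g x c η (u k))
    {j : ℕ} (hj : j ≤ J) : ‖u j - x‖ ^ 2 ≤ 16 * τ ^ 2 / ηg ^ 2 * ‖c‖ ^ 2 := by
  have hJL : J * (|η| * L) ≤ 1 := by
    refine mul_le_one_of_four_mul_mul_sq_le (mod_cast hJ) (le_of_eq_of_le ?_ hstep)
    rw [hτ, mul_pow, sq_abs]
    field_simp
  have drift : ‖u j - x‖ ≤ 4 * (J * |η| * ‖c‖) :=
    calc ‖u j - x‖
      _ = ‖(correctedStep g x c η)^[j] x - x‖ := by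
          rw [eq_iterate_of_forall_lt_succ_eq hrec hj, hu0]
      _ ≤ j * |η| * ‖c‖ * Real.exp (j * (|η| * L)) :=
          norm_iterate_correctedStep_sub_le hL hLip c η j
      _ ≤ J * |η| * ‖c‖ * Real.exp (J * (|η| * L)) := by gcongr
      _ ≤ J * |η| * ‖c‖ * Real.exp 1 := by gcongr
      _ ≤ J * |η| * ‖c‖ * 4 := by gcongr; linarith [Real.exp_one_lt_three]
      _ = 4 * (J * |η| * ‖c‖) := mul_comm _ _
  calc ‖u j - x‖ ^ 2
    _ ≤ (4 * (J * |η| * ‖c‖)) ^ 2 := by gcongr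
    _ = 16 * (J * η) ^ 2 * ‖c‖ ^ 2 := by simp only [mul_pow, sq_abs]; ring
    _ = 16 * τ ^ 2 / ηg ^ 2 * ‖c‖ ^ 2 := by rw [hτ]; field_simp

/-- Per-client drift bound (inside Lemma A.2, deterministic case): with `τ = J·η·η_g`
and `4τ²L²/(η_g²J) ≤ 1/(J−1)`, the bias-corrected local iterates
`u₀ = x`, `u_j = u_{j−1} − η(∇f(u_{j−1}) − ∇f(x) + c)` satisfy
`‖u_j − x‖² ≤ (16τ²/η_g²)‖c‖²` for every `0 ≤ j ≤ J`. -/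
theorem local_iterate_drift_bound
    {E : Type*} [NormedAddCommGroup E] [InnerProductSpace ℝ E]
    (f : E → ℝ) (f' : E → E) (L : ℝ) (hL : 0 ≤ L)
    (hdiff : ∀ y : E, HasFDerivAt f (InnerProductSpace.toDualMap ℝ E (f' y) : E →L[ℝ] ℝ) y)
    (hLip : ∀ x₁ x₂ : E, ‖f' x₁ - f' x₂‖ ≤ L * ‖x₁ - x₂‖)
    (x c : E) (J : ℕ) (hJ : 2 ≤ J) (η ηg τ : ℝ)
    (hη : 0 < η) (hηg : 1 ≤ ηg) (hτ : τ = J * η * ηg)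
    (hstep : 4 * τ ^ 2 * L ^ 2 / (ηg ^ 2 * J) ≤ 1 / ((J : ℝ) - 1))
    (u : ℕ → E) (hu0 : u 0 = x)
    (hrec : ∀ j, 1 ≤ j → j ≤ J → u j = u (j - 1) - η • (f' (u (j - 1)) - f' x + c)) :
    ∀ j ≤ J, ‖u j - x‖ ^ 2 ≤ 16 * τ ^ 2 / ηg ^ 2 * ‖c‖ ^ 2 :=
  fun _ ↦ local_iterate_drift_bound_general hL (hLip · x) c hJ (by positivity) hτ hstep hu0
    fun k hk ↦ hrec (k + 1) k.succ_pos hk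
end

section
/- Let E be a real inner product space and let f₁, …, f_N : E → ℝ be differentiable functions whose gradients ∇f_i are all L-Lipschitz (L ≥ 0). Let λ ∈ ℝ^N satisfy λ_i ≥ 0 for all i and Σ_{i=1}^N λ_i = 1. Let x ∈ E and set c = Σ_{i=1}^N λ_i ∇f_i(x). Let J ≥ 2 be an integer, η > 0, η_g ≥ 1, τ = J·η·η_g, and assume 4τ²L²/(η_g²·J) ≤ 1/(J−1). For each i define u_{i,0} = x and u_{i,j} = u_{i,j−1} − η·(∇f_i(u_{i,j−1}) − ∇f_i(x) + c) for j = 1, …, J. Then the drift ℰ := (1/J)·Σ_{i=1}^N Σ_{j=1}^J λ_i ‖u_{i,j} − x‖² satisfies ℰ ≤ (16τ²/η_g²)·‖Σ_{i=1}^N λ_i ∇f_i(x)‖². -/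
open scoped RealInnerProductSpace

/-!
On every client the distance `d_j = ‖u_j - x‖` satisfies `d_{j+1} ≤ (1 + ηL) d_j + η‖c‖` and
`d_0 = 0`. As long as `ηL(J - 1) ≤ θ < 1`, the amplification over the whole run costs only the
factor `1 / (1 - θ)`, so that `d_j ≤ jη‖c‖ / (1 - θ)`. The step-size condition allows `θ = 1/2`, and
a bound uniform over clients and steps passes to the weighted average of the squares.
-/

section Drift

theorem le_div_one_sub_of_le_one_add_mul_add {d : ℕ → ℝ} {a b θ : ℝ} {J : ℕ}
    (ha : 0 ≤ a) (hb : 0 ≤ b) (hθ : θ < 1) (haJ : a * ((J : ℝ) - 1) ≤ θ) (hd0 : d 0 ≤ 0)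
    (hd : ∀ j < J, d (j + 1) ≤ (1 + a) * d j + b) :
    ∀ j ≤ J, d j ≤ j * b / (1 - θ) := by
  have hθ' : 0 < 1 - θ := sub_pos.2 hθ
  intro j hj
  induction j with
  | zero => simpa using hd0
  | succ j ih =>
    have hjJ : (j : ℝ) ≤ J - 1 := le_sub_iff_add_le.2 (by exact_mod_cast hj)
    have haj : a * j ≤ θ := (mul_le_mul_of_nonneg_left hjJ ha).trans haJ
    calc d (j + 1) ≤ (1 + a) * d j + b := hd j hj
      _ ≤ (1 + a) * (j * b / (1 - θ)) + b := by gcongr; exact ih (by lia)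
      _ = (j + a * j + (1 - θ)) * b / (1 - θ) := by field_simp
      _ ≤ (j + θ + (1 - θ)) * b / (1 - θ) := by gcongr
      _ = (j + 1 : ℕ) * b / (1 - θ) := by push_cast; ring

variable {E : Type*} [SeminormedAddCommGroup E] [NormedSpace ℝ E]

theorem norm_sub_smul_sub_add_sub_le {g : E → E} {x y c : E} {L η : ℝ} (hη : 0 ≤ η)
    (hg : ‖g y - g x‖ ≤ L * ‖y - x‖) :
    ‖y - η • (g y - g x + c) - x‖ ≤ (1 + η * L) * ‖y - x‖ + η * ‖c‖ :=
  calc ‖y - η • (g y - g x + c) - x‖ = ‖(y - x) - η • (g y - g x + c)‖ := by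
        rw [sub_right_comm]
    _ ≤ ‖y - x‖ + η * ‖g y - g x + c‖ := by
        simpa only [norm_smul, Real.norm_of_nonneg hη] using
          norm_sub_le (y - x) (η • (g y - g x + c))
    _ ≤ ‖y - x‖ + η * (L * ‖y - x‖ + ‖c‖) := by
        gcongr
        exact norm_add_le_of_le hg le_rfl
    _ = (1 + η * L) * ‖y - x‖ + η * ‖c‖ := by ring

theorem norm_correctedIterate_sub_le {g : E → E} {x c : E} {L η θ : ℝ} {J : ℕ} {u : ℕ → E}
    (hL : 0 ≤ L) (hη : 0 ≤ η) (hθ : θ < 1) (hstep : η * L * ((J : ℝ) - 1) ≤ θ)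
    (hg : ∀ y, ‖g y - g x‖ ≤ L * ‖y - x‖) (hu0 : u 0 = x)
    (hrec : ∀ j < J, u (j + 1) = u j - η • (g (u j) - g x + c)) :
    ∀ j ≤ J, ‖u j - x‖ ≤ j * (η * ‖c‖) / (1 - θ) := by
  refine le_div_one_sub_of_le_one_add_mul_add (d := fun j ↦ ‖u j - x‖) (mul_nonneg hη hL)
    (by positivity) hθ hstep (by simp [hu0]) fun j hj ↦ ?_
  simpa only [hrec j hj] using norm_sub_smul_sub_add_sub_le hη (hg (u j))

theorem one_div_mul_sum_sum_weight_mul_le {ι : Type*} [Fintype ι] {w : ι → ℝ} {a : ι → ℕ → ℝ}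
    {M : ℝ} {J : ℕ} (hw0 : ∀ i, 0 ≤ w i) (hw1 : ∑ i, w i = 1) (hJ : 0 < J)
    (ha : ∀ i, ∀ j < J, a i j ≤ M) :
    (1 / (J : ℝ)) * ∑ i, ∑ j ∈ Finset.range J, w i * a i j ≤ M :=
  calc (1 / (J : ℝ)) * ∑ i, ∑ j ∈ Finset.range J, w i * a i j
      ≤ (1 / (J : ℝ)) * ∑ i, ∑ _j ∈ Finset.range J, w i * M := by
        gcongr with i _ j hj
        · exact hw0 i
        · exact ha i j (Finset.mem_range.1 hj)
    _ = (1 / (J : ℝ)) * (J * ((∑ i, w i) * M)) := by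
        simp only [Finset.sum_const, Finset.card_range, nsmul_eq_mul, Finset.sum_mul,
          Finset.mul_sum]
    _ = M := by
        rw [hw1]
        field_simp

theorem bounded_drift_general {ι : Type*} [Fintype ι] {g : ι → E → E} {L : ℝ} (hL : 0 ≤ L)
    {x c : E} (hg : ∀ i y, ‖g i y - g i x‖ ≤ L * ‖y - x‖)
    {w : ι → ℝ} (hw0 : ∀ i, 0 ≤ w i) (hw1 : ∑ i, w i = 1)
    {J : ℕ} (hJ : 0 < J) {η θ : ℝ} (hη : 0 ≤ η) (hθ : θ < 1)
    (hstep : η * L * ((J : ℝ) - 1) ≤ θ) {u : ι → ℕ → E} (hu0 : ∀ i, u i 0 = x)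
    (hrec : ∀ i, ∀ j < J, u i (j + 1) = u i j - η • (g i (u i j) - g i x + c)) :
    (1 / (J : ℝ)) * ∑ i, ∑ j ∈ Finset.range J, w i * ‖u i (j + 1) - x‖ ^ 2
      ≤ (J * η / (1 - θ)) ^ 2 * ‖c‖ ^ 2 := by
  refine one_div_mul_sum_sum_weight_mul_le hw0 hw1 hJ fun i j hj ↦ ?_
  have : 0 < 1 - θ := sub_pos.2 hθ
  have hiter : ‖u i (j + 1) - x‖ ≤ J * η / (1 - θ) * ‖c‖ :=
    calc ‖u i (j + 1) - x‖ ≤ (j + 1 : ℕ) * (η * ‖c‖) / (1 - θ) :=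
          norm_correctedIterate_sub_le hL hη hθ hstep (hg i) (hu0 i) (hrec i) (j + 1) hj
      _ ≤ J * (η * ‖c‖) / (1 - θ) := by gcongr; exact hj
      _ = J * η / (1 - θ) * ‖c‖ := by ring
  rw [← mul_pow]
  gcongr

end Drift

theorem mul_sub_one_le_half_of_four_mul_sq_le {J a : ℝ} (hJ : 1 < J)
    (ha : 4 * J * a ^ 2 ≤ 1 / (J - 1)) : a * (J - 1) ≤ 1 / 2 := by
  have hJ' : 0 < J - 1 := sub_pos.2 hJ
  refine le_of_sq_le_sq ?_ (by norm_num)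
  calc (a * (J - 1)) ^ 2 = (J - 1) * a ^ 2 * (J - 1) := by ring
    _ ≤ J * a ^ 2 * (J - 1) := by gcongr; linarith
    _ ≤ (1 / 2) ^ 2 := by linarith [(le_div_iff₀ hJ').1 ha]

theorem mul_sub_one_le_half_of_effectiveStep {J η ηg τ L : ℝ} (hJ : 1 < J) (hηg : ηg ≠ 0)
    (hτ : τ = J * η * ηg) (hstep : 4 * τ ^ 2 * L ^ 2 / (ηg ^ 2 * J) ≤ 1 / (J - 1)) :
    η * L * (J - 1) ≤ 1 / 2 := by
  refine mul_sub_one_le_half_of_four_mul_sq_le hJ (hstep.trans_eq' ?_)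
  rw [hτ]
  field_simp

/-- Bounded drift lemma (Lemma A.2, deterministic case ζ = 0): with weights `λ` in the
simplex, control variate `c = Σᵢ λᵢ ∇fᵢ(x)`, effective step size `τ = J·η·η_g` and the
step-size condition `4τ²L²/(η_g²J) ≤ 1/(J−1)`, the drift
`ℰ = (1/J) Σᵢ Σ_{j=1}^J λᵢ ‖u_{i,j} − x‖²` of the bias-corrected local iterates satisfies
`ℰ ≤ (16τ²/η_g²)‖Σᵢ λᵢ ∇fᵢ(x)‖²`. -/
theorem bounded_drift
    {E : Type*} [NormedAddCommGroup E] [InnerProductSpace ℝ E]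
    (N : ℕ) (f : Fin N → E → ℝ) (f' : Fin N → E → E) (L : ℝ) (hL : 0 ≤ L)
    (hdiff : ∀ i (y : E),
      HasFDerivAt (f i) (InnerProductSpace.toDualMap ℝ E (f' i y) : E →L[ℝ] ℝ) y)
    (hLip : ∀ i (x₁ x₂ : E), ‖f' i x₁ - f' i x₂‖ ≤ L * ‖x₁ - x₂‖)
    (lam : Fin N → ℝ) (hlam0 : ∀ i, 0 ≤ lam i) (hlam1 : ∑ i, lam i = 1)
    (x c : E) (hc : c = ∑ i, lam i • f' i x)
    (J : ℕ) (hJ : 2 ≤ J) (η ηg τ : ℝ)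
    (hη : 0 < η) (hηg : 1 ≤ ηg) (hτ : τ = J * η * ηg)
    (hstep : 4 * τ ^ 2 * L ^ 2 / (ηg ^ 2 * J) ≤ 1 / ((J : ℝ) - 1))
    (u : Fin N → ℕ → E) (hu0 : ∀ i, u i 0 = x)
    (hrec : ∀ i, ∀ j < J, u i (j + 1) = u i j - η • (f' i (u i j) - f' i x + c)) :
    (1 / (J : ℝ)) * ∑ i, ∑ j ∈ Finset.range J, lam i * ‖u i (j + 1) - x‖ ^ 2
      ≤ 16 * τ ^ 2 / ηg ^ 2 * ‖∑ i, lam i • f' i x‖ ^ 2 := by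
  have hηL := mul_sub_one_le_half_of_effectiveStep (by exact_mod_cast hJ) (by positivity) hτ hstep
  exact hc ▸ (bounded_drift_general hL (fun i y ↦ hLip i y x) hlam0 hlam1 (by lia) hη.le
    one_half_lt_one hηL hu0 hrec).trans (by gcongr; rw [hτ]; field_simp; norm_num)
end

section
/- Let E be a real inner product space and let f₁, …, f_N : E → ℝ be differentiable functions whose gradients ∇f_i are all L-Lipschitz (L ≥ 0). Let λ ∈ ℝ^N satisfy λ_i ≥ 0 for all i and Σ_{i=1}^N λ_i = 1. Let x ∈ E, let J ≥ 1 be an integer, and let v_{i,j} ∈ E be arbitrary points for i = 1, …, N and j = 1, …, J. Define d = (1/J)·Σ_{i=1}^N Σ_{j=1}^J λ_i ∇f_i(v_{i,j}) and ℰ = (1/J)·Σ_{i=1}^N Σ_{j=1}^J λ_i ‖v_{i,j} − x‖². Then ‖d‖² ≥ −L²·ℰ + (1/2)·‖Σ_{i=1}^N λ_i ∇f_i(x)‖². -/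
open scoped RealInnerProductSpace

/-!
The update `d` is a single weighted sum over the pairs `(i, j)`, with weights `λᵢ / J` of total
mass `1`, and `∑ λᵢ ∇fᵢ(x)` is the same weighted sum with every `v_{i,j}` replaced by `x`. By
Cauchy–Schwarz, the squared norm of the difference is at most the weighted sum of the
`‖∇fᵢ(v_{i,j}) - ∇fᵢ(x)‖²`, hence at most `L²ℰ`, and `‖a‖² ≤ 2 (‖b‖² + ‖b - a‖²)` converts this
into the lower bound on `‖d‖²`.
-/

section WeightedSums

variable {κ E F : Type*} [SeminormedAddCommGroup E] [SeminormedAddCommGroup F]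

theorem norm_sq_le_two_mul_add_norm_sub_sq (a b : F) :
    ‖a‖ ^ 2 ≤ 2 * (‖b‖ ^ 2 + ‖b - a‖ ^ 2) :=
  calc ‖a‖ ^ 2 ≤ (‖b‖ + ‖b - a‖) ^ 2 := by gcongr; simpa using norm_sub_le b (b - a)
    _ ≤ 2 * (‖b‖ ^ 2 + ‖b - a‖ ^ 2) := add_sq_le

variable [NormedSpace ℝ F] {s : Finset κ} {w : κ → ℝ}

theorem norm_sum_smul_sq_le_sum_mul_sum (hw : ∀ k ∈ s, 0 ≤ w k) (z : κ → F) :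
    ‖∑ k ∈ s, w k • z k‖ ^ 2 ≤ (∑ k ∈ s, w k) * ∑ k ∈ s, w k * ‖z k‖ ^ 2 := by
  have norm_le : ‖∑ k ∈ s, w k • z k‖ ≤ ∑ k ∈ s, w k * ‖z k‖ :=
    norm_sum_le_of_le s fun k hk => (norm_smul_of_nonneg (hw k hk) (z k)).le
  calc ‖∑ k ∈ s, w k • z k‖ ^ 2 ≤ (∑ k ∈ s, w k * ‖z k‖) ^ 2 := by gcongr
    _ ≤ (∑ k ∈ s, w k) * ∑ k ∈ s, w k * ‖z k‖ ^ 2 :=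
      Finset.sum_sq_le_sum_mul_sum_of_sq_le_mul s hw
        (fun k hk => mul_nonneg (hw k hk) (sq_nonneg _)) fun k _ => le_of_eq (by ring)

theorem norm_sum_smul_sub_sum_smul_sq_le (hw : ∀ k ∈ s, 0 ≤ w k) {g : κ → E → F} {L : ℝ} {x : E}
    {v : κ → E} (hg : ∀ k ∈ s, ‖g k (v k) - g k x‖ ≤ L * ‖v k - x‖) :
    ‖∑ k ∈ s, w k • g k (v k) - ∑ k ∈ s, w k • g k x‖ ^ 2 ≤
      (∑ k ∈ s, w k) * (L ^ 2 * ∑ k ∈ s, w k * ‖v k - x‖ ^ 2) := by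
  have lipschitz_sq (k : κ) (hk : k ∈ s) :
      ‖g k (v k) - g k x‖ ^ 2 ≤ L ^ 2 * ‖v k - x‖ ^ 2 := by
    rw [← mul_pow]
    exact pow_le_pow_left₀ (norm_nonneg _) (hg k hk) 2
  simp only [← Finset.sum_sub_distrib, ← smul_sub]
  refine (norm_sum_smul_sq_le_sum_mul_sum hw _).trans
    (mul_le_mul_of_nonneg_left ?_ (Finset.sum_nonneg hw))
  calc ∑ k ∈ s, w k * ‖g k (v k) - g k x‖ ^ 2
      ≤ ∑ k ∈ s, w k * (L ^ 2 * ‖v k - x‖ ^ 2) :=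
        Finset.sum_le_sum fun k hk => mul_le_mul_of_nonneg_left (lipschitz_sq k hk) (hw k hk)
    _ = L ^ 2 * ∑ k ∈ s, w k * ‖v k - x‖ ^ 2 := by simp only [Finset.mul_sum, mul_left_comm]

end WeightedSums

section DoubleAverages

variable {ι κ 𝕜 M : Type*} [Fintype ι] [Fintype κ] [Semifield 𝕜] [AddCommMonoid M] [Module 𝕜 M]

theorem one_div_card_smul_sum_sum_smul (w : ι → 𝕜) (z : ι → κ → M) :
    (1 / (Fintype.card κ : 𝕜)) • ∑ i, ∑ k, w i • z i k =
      ∑ p : ι × κ, (w p.1 / Fintype.card κ) • z p.1 p.2 := by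
  simp only [Fintype.sum_prod_type, Finset.smul_sum, smul_smul, one_div_mul_eq_div]

theorem sum_prod_div_card_smul [CharZero 𝕜] [Nonempty κ] (w : ι → 𝕜) (z : ι → M) :
    ∑ p : ι × κ, (w p.1 / Fintype.card κ) • z p.1 = ∑ i, w i • z i := by
  have card_ne_zero : (Fintype.card κ : 𝕜) ≠ 0 := Nat.cast_ne_zero.mpr Fintype.card_ne_zero
  simp only [Fintype.sum_prod_type, Finset.sum_const, Finset.card_univ,
    ← Nat.cast_smul_eq_nsmul 𝕜, smul_smul, mul_div_cancel₀ _ card_ne_zero]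

end DoubleAverages

theorem aggregate_update_lower_bound_general
    {ι κ E F : Type*} [Fintype ι] [Fintype κ] [Nonempty κ] [SeminormedAddCommGroup E]
    [SeminormedAddCommGroup F] [NormedSpace ℝ F] {g : ι → E → F} {L : ℝ} {x : E}
    (hg : ∀ i y, ‖g i y - g i x‖ ≤ L * ‖y - x‖) {w : ι → ℝ} (hw : ∀ i, 0 ≤ w i)
    (v : ι → κ → E) :
    -((∑ i, w i) * L ^ 2) * ((1 / (Fintype.card κ : ℝ)) * ∑ i, ∑ k, w i * ‖v i k - x‖ ^ 2) +
        1 / 2 * ‖∑ i, w i • g i x‖ ^ 2 ≤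
      ‖(1 / (Fintype.card κ : ℝ)) • ∑ i, ∑ k, w i • g i (v i k)‖ ^ 2 := by
  have drift := norm_sum_smul_sub_sum_smul_sq_le (s := Finset.univ)
    (w := fun p : ι × κ => w p.1 / Fintype.card κ) (g := fun p => g p.1) (v := fun p => v p.1 p.2)
    (fun p _ => div_nonneg (hw p.1) (Nat.cast_nonneg _)) (fun p _ => hg p.1 _)
  have weight_sum : ∑ p : ι × κ, w p.1 / Fintype.card κ = ∑ i, w i := by
    simpa using sum_prod_div_card_smul (κ := κ) w (fun _ => (1 : ℝ))
  have drift_sum := one_div_card_smul_sum_sum_smul w fun i k => ‖v i k - x‖ ^ 2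
  simp only [smul_eq_mul] at drift_sum
  rw [weight_sum, ← drift_sum, sum_prod_div_card_smul w (fun i => g i x),
    ← one_div_card_smul_sum_sum_smul w (fun i k => g i (v i k))] at drift
  linarith [norm_sq_le_two_mul_add_norm_sub_sq (∑ i, w i • g i x)
    ((1 / (Fintype.card κ : ℝ)) • ∑ i, ∑ k, w i • g i (v i k))]

/-- Lemma A.3 (deterministic content): the squared aggregated update
`d = (1/J) Σᵢ Σⱼ λᵢ ∇fᵢ(v_{i,j})` is lower bounded by half the true gradient norm minus
an `L²`-weighted drift term: `‖d‖² ≥ −L²ℰ + (1/2)‖Σᵢ λᵢ ∇fᵢ(x)‖²`. -/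
theorem aggregate_update_lower_bound
    {E : Type*} [NormedAddCommGroup E] [InnerProductSpace ℝ E]
    (N : ℕ) (f : Fin N → E → ℝ) (f' : Fin N → E → E) (L : ℝ) (hL : 0 ≤ L)
    (hdiff : ∀ i (y : E),
      HasFDerivAt (f i) (InnerProductSpace.toDualMap ℝ E (f' i y) : E →L[ℝ] ℝ) y)
    (hLip : ∀ i (x₁ x₂ : E), ‖f' i x₁ - f' i x₂‖ ≤ L * ‖x₁ - x₂‖)
    (lam : Fin N → ℝ) (hlam0 : ∀ i, 0 ≤ lam i) (hlam1 : ∑ i, lam i = 1)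
    (x : E) (J : ℕ) (hJ : 1 ≤ J) (v : Fin N → Fin J → E)
    (d : E) (hd : d = (1 / (J : ℝ)) • ∑ i, ∑ j, lam i • f' i (v i j))
    (ℰ : ℝ) (hE : ℰ = (1 / (J : ℝ)) * ∑ i, ∑ j, lam i * ‖v i j - x‖ ^ 2) :
    ‖d‖ ^ 2 ≥ -(L ^ 2) * ℰ + 1 / 2 * ‖∑ i, lam i • f' i x‖ ^ 2 := by
  have : Nonempty (Fin J) := Fin.pos_iff_nonempty.mp hJ
  simpa [hd, hE, hlam1] using aggregate_update_lower_bound_general (fun i y => hLip i y x) hlam0 v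
end

section
/- Let H be a real inner product space, let Λ ⊆ H be a nonempty convex set, let μ ≥ 0, and let ψ : H → ℝ be μ-strongly convex on Λ, i.e. ψ(t·a + (1−t)·b) ≤ t·ψ(a) + (1−t)·ψ(b) − (μ/2)·t·(1−t)·‖a − b‖² for all a, b ∈ Λ and t ∈ [0,1]. Let s ∈ H, λ₀ ∈ H, σ > 0, and let λ⁺ ∈ Λ be a minimizer over Λ of the function λ ↦ ψ(λ) − ⟨s, λ⟩ + ‖λ − λ₀‖²/(2σ). Then for every λ ∈ Λ: ψ(λ⁺) − ⟨s, λ⁺⟩ ≤ ψ(λ) − ⟨s, λ⟩ + (1/(2σ))·(‖λ − λ₀‖² − ‖λ − λ⁺‖² − ‖λ⁺ − λ₀‖²) − (μ/2)·‖λ⁺ − λ‖². -/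
open scoped RealInnerProductSpace

/-!
The regularized objective `f + κ ‖· - c‖²` inherits strong convexity from both summands, with
modulus `m + 2κ`. A strongly convex function grows at least quadratically away from its minimizer:
compare the minimizer `x` with the points of the segment from `x` to `y`, divide by the step length
and let it tend to zero. Applied to the regularized objective, this growth bound is the three-point
inequality.
-/

open Filter Topology

lemma le_of_forall_one_sub_mul_le {a b : ℝ} (h : ∀ t ∈ Set.Ioo (0 : ℝ) 1, (1 - t) * a ≤ b) :
    a ≤ b := by
  have tendsto_left : Tendsto (fun t : ℝ ↦ (1 - t) * a) (𝓝[>] 0) (𝓝 a) := by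
    have : Continuous fun t : ℝ ↦ (1 - t) * a := by fun_prop
    simpa using (this.tendsto 0).mono_left nhdsWithin_le_nhds
  exact le_of_tendsto tendsto_left (eventually_of_mem (Ioo_mem_nhdsGT one_pos) h)

section NormedSpace

variable {E : Type*} [NormedAddCommGroup E] [NormedSpace ℝ E] {s : Set E} {f g : E → ℝ}

lemma strongConvexOn_add {m n : ℝ} (hf : StrongConvexOn s m f) (hg : StrongConvexOn s n g) :
    StrongConvexOn s (m + n) (f + g) := by
  refine (UniformConvexOn.add hf hg).mono fun r ↦ le_of_eq ?_
  simp only [Pi.add_apply]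
  ring

lemma strongConvexOn_of_forall_le {m : ℝ} (hs : Convex ℝ s)
    (hf : ∀ a ∈ s, ∀ b ∈ s, ∀ t : ℝ, 0 ≤ t → t ≤ 1 →
      f (t • a + (1 - t) • b) ≤ t * f a + (1 - t) * f b - m / 2 * (t * (1 - t)) * ‖a - b‖ ^ 2) :
    StrongConvexOn s m f := by
  refine ⟨hs, fun a ha b hb t u ht hu htu ↦ ?_⟩
  obtain rfl : u = 1 - t := by linarith
  simp only [smul_eq_mul]
  linarith [hf a ha b hb t ht (by linarith)]

lemma add_modulus_le_of_isMinOn {φ : ℝ → ℝ} {x y : E} (hf : UniformConvexOn s φ f)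
    (hmin : IsMinOn f s x) (hx : x ∈ s) (hy : y ∈ s) : f x + φ ‖y - x‖ ≤ f y := by
  suffices φ ‖y - x‖ ≤ f y - f x by linarith
  refine le_of_forall_one_sub_mul_le fun t ⟨ht, ht1⟩ ↦ le_of_mul_le_mul_left ?_ ht
  have one_sub_nonneg : 0 ≤ 1 - t := sub_nonneg.2 ht1.le
  have min_le : f x ≤ f (t • y + (1 - t) • x) :=
    hmin (hf.1 hy hx ht.le one_sub_nonneg (add_sub_cancel _ _))
  have le_chord : f (t • y + (1 - t) • x) ≤ t * f y + (1 - t) * f x - t * (1 - t) * φ ‖y - x‖ :=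
    hf.2 hy hx ht.le one_sub_nonneg (add_sub_cancel _ _)
  linarith

end NormedSpace

section InnerProductSpace

variable {H : Type*} [NormedAddCommGroup H] [InnerProductSpace ℝ H] {s : Set H} {f : H → ℝ}

lemma strongConvexOn_sub_inner {m : ℝ} (hf : StrongConvexOn s m f) (v : H) :
    StrongConvexOn s m (fun x ↦ f x - ⟪v, x⟫) := by
  have inner_concave : ConcaveOn ℝ s fun x ↦ ⟪v, x⟫ := (innerₗ H v).concaveOn hf.1
  have := UniformConvexOn.sub hf (uniformConcaveOn_zero.2 inner_concave)
  rwa [add_zero] at this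

lemma strongConvexOn_mul_norm_sub_sq (hs : Convex ℝ s) (κ : ℝ) (c : H) :
    StrongConvexOn s (2 * κ) (fun x ↦ κ * ‖x - c‖ ^ 2) := by
  have affine_remainder (x : H) :
      κ * ‖x - c‖ ^ 2 - 2 * κ / 2 * ‖x‖ ^ 2 = ⟪-(2 * κ) • c, x⟫ + κ * ‖c‖ ^ 2 := by
    rw [norm_sub_sq_real, real_inner_smul_left, real_inner_comm]
    ring
  simp only [strongConvexOn_iff_convex, affine_remainder]
  exact ((innerₗ H (-(2 * κ) • c)).convexOn hs).add_const _

theorem three_point_prox_inequality_general {m κ : ℝ} {c x y : H} (hf : StrongConvexOn s m f)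
    (hmin : IsMinOn (fun z ↦ f z + κ * ‖z - c‖ ^ 2) s x) (hx : x ∈ s) (hy : y ∈ s) :
    f x ≤ f y + κ * (‖y - c‖ ^ 2 - ‖y - x‖ ^ 2 - ‖x - c‖ ^ 2) - m / 2 * ‖x - y‖ ^ 2 := by
  have objective_strongConvexOn : StrongConvexOn s (m + 2 * κ) fun z ↦ f z + κ * ‖z - c‖ ^ 2 :=
    strongConvexOn_add hf (strongConvexOn_mul_norm_sub_sq hf.1 κ c)
  have quadratic_growth :
      f x + κ * ‖x - c‖ ^ 2 + (m + 2 * κ) / 2 * ‖y - x‖ ^ 2 ≤ f y + κ * ‖y - c‖ ^ 2 :=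
    add_modulus_le_of_isMinOn objective_strongConvexOn hmin hx hy
  rw [norm_sub_rev x y]
  linarith

end InnerProductSpace

/-- Three-point prox inequality (Lemma A.4): if `λ⁺` minimizes
`λ ↦ ψ(λ) − ⟪s, λ⟫ + ‖λ − λ₀‖²/(2σ)` over the convex set `Λ`, where `ψ` is `μ`-strongly
convex on `Λ`, then for every `λ ∈ Λ`,
`ψ(λ⁺) − ⟪s, λ⁺⟫ ≤ ψ(λ) − ⟪s, λ⟫ + (1/(2σ))(‖λ − λ₀‖² − ‖λ − λ⁺‖² − ‖λ⁺ − λ₀‖²)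
  − (μ/2)‖λ⁺ − λ‖²`. -/
theorem three_point_prox_inequality
    {H : Type*} [NormedAddCommGroup H] [InnerProductSpace ℝ H]
    (Λ : Set H) (hΛne : Λ.Nonempty) (hΛconv : Convex ℝ Λ)
    (μ : ℝ) (hμ : 0 ≤ μ) (ψ : H → ℝ)
    (hsc : ∀ a ∈ Λ, ∀ b ∈ Λ, ∀ t : ℝ, 0 ≤ t → t ≤ 1 →
      ψ (t • a + (1 - t) • b) ≤
        t * ψ a + (1 - t) * ψ b - μ / 2 * (t * (1 - t)) * ‖a - b‖ ^ 2)
    (s lam₀ : H) (σ : ℝ) (hσ : 0 < σ)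
    (lamp : H) (hmem : lamp ∈ Λ)
    (hmin : ∀ lam ∈ Λ, ψ lamp - ⟪s, lamp⟫ + ‖lamp - lam₀‖ ^ 2 / (2 * σ) ≤
      ψ lam - ⟪s, lam⟫ + ‖lam - lam₀‖ ^ 2 / (2 * σ)) :
    ∀ lam ∈ Λ, ψ lamp - ⟪s, lamp⟫ ≤ ψ lam - ⟪s, lam⟫
      + 1 / (2 * σ) * (‖lam - lam₀‖ ^ 2 - ‖lam - lamp‖ ^ 2 - ‖lamp - lam₀‖ ^ 2)
      - μ / 2 * ‖lamp - lam‖ ^ 2 := by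
  have hmin' : IsMinOn (fun z ↦ ψ z - ⟪s, z⟫ + 1 / (2 * σ) * ‖z - lam₀‖ ^ 2) Λ lamp := by
    simpa only [isMinOn_iff, one_div_mul_eq_div] using hmin
  exact fun lam hlam ↦ three_point_prox_inequality_general
    (strongConvexOn_sub_inner (strongConvexOn_of_forall_le hΛconv hsc) s) hmin' hmem hlam
end

section
/- Let E be a real inner product space and let f₁, …, f_N : E → ℝ be differentiable functions that are each μ-strongly convex (μ ≥ 0) and whose gradients ∇f_i are all L-Lipschitz (L ≥ 0). Let λ ∈ ℝ^N satisfy λ_i ≥ 0 for all i and Σ_{i=1}^N λ_i = 1. Let x_r, x⁺ ∈ E, let J ≥ 1 be an integer, and let v_{i,j} ∈ E be arbitrary points for i = 1, …, N and j = 1, …, J. Define d = (1/J)·Σ_{i=1}^N Σ_{j=1}^J λ_i ∇f_i(v_{i,j}) and ℰ = (1/J)·Σ_{i=1}^N Σ_{j=1}^J λ_i ‖v_{i,j} − x_r‖². Then ⟨d, x⁺ − x_r⟩ ≥ Σ_{i=1}^N λ_i f_i(x⁺) − Σ_{i=1}^N λ_i f_i(x_r) + (μ/4 − 2L)·‖x⁺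 − x_r‖² − 2L·ℰ. -/
open scoped RealInnerProductSpace

/-!
Strong convexity between the evaluation point `x` and the two points `y`, `z`, combined with the
Lipschitz bound on `⟪f' z - f' x, z - x⟫`, gives
`⟪f' x, z - y⟫ ≥ f z - f y + μ / 2 * (‖y - x‖ ^ 2 + ‖z - x‖ ^ 2) - L * ‖z - x‖ ^ 2`.
Two uses of `‖a - b‖ ^ 2 ≤ 2 * (‖a - c‖ ^ 2 + ‖b - c‖ ^ 2)` produce the constants: with `c = x` it
turns `μ / 2` into `μ / 4`, and with `c = y` it splits `L * ‖z - x‖ ^ 2` into the step `‖z - y‖ ^ 2`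
and the drift `‖x - y‖ ^ 2`, each with factor `2 * L`. The theorem is the average of this inequality
with weights `λᵢ / J` over the pairs `(i, j)`.
-/

lemma norm_sub_sq_le_two_mul {G : Type*} [SeminormedAddCommGroup G] (a b c : G) :
    ‖a - b‖ ^ 2 ≤ 2 * (‖a - c‖ ^ 2 + ‖b - c‖ ^ 2) :=
  calc
    ‖a - b‖ ^ 2 ≤ (‖a - c‖ + ‖b - c‖) ^ 2 := by
      gcongr
      rw [norm_sub_rev b c]
      exact norm_sub_le_norm_sub_add_norm_sub a c b
    _ ≤ 2 * (‖a - c‖ ^ 2 + ‖b - c‖ ^ 2) := add_sq_le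

lemma sum_prod_div_card_mul {ι κ : Type*} [Fintype ι] [Fintype κ] [Nonempty κ] (a b : ι → ℝ) :
    ∑ p : ι × κ, a p.1 / Fintype.card κ * b p.1 = ∑ i, a i * b i := by
  have card_ne_zero : (Fintype.card κ : ℝ) ≠ 0 := Nat.cast_ne_zero.mpr Fintype.card_ne_zero
  simp only [Fintype.sum_prod_type, Finset.sum_const, Finset.card_univ, nsmul_eq_mul]
  refine Finset.sum_congr rfl fun i _ => ?_
  field_simp

section

variable {E : Type*} [NormedAddCommGroup E] [InnerProductSpace ℝ E]

lemma real_inner_le_mul_norm_sq {L : ℝ} {a b : E} (h : ‖a‖ ≤ L * ‖b‖) :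
    ⟪a, b⟫ ≤ L * ‖b‖ ^ 2 :=
  calc
    ⟪a, b⟫ ≤ ‖a‖ * ‖b‖ := real_inner_le_norm a b
    _ ≤ L * ‖b‖ * ‖b‖ := by gcongr
    _ = L * ‖b‖ ^ 2 := by ring

/-- First-order `μ`-strong convexity of `f`. The gradient is passed as the function `f'`, and the
inequality makes `f' a` a subgradient of `f` at `a` when `0 ≤ μ`. -/
def FirstOrderStrongConvex (μ : ℝ) (f : E → ℝ) (f' : E → E) : Prop :=
  ∀ a b, f a + ⟪f' a, b - a⟫ + μ / 2 * ‖b - a‖ ^ 2 ≤ f b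

namespace FirstOrderStrongConvex

variable {f : E → ℝ} {f' : E → E} {L μ : ℝ}

lemma le_add_inner_of_lipschitz (hf : FirstOrderStrongConvex μ f f')
    (hLip : ∀ x₁ x₂, ‖f' x₁ - f' x₂‖ ≤ L * ‖x₁ - x₂‖) (x z : E) :
    f z ≤ f x + ⟪f' x, z - x⟫ + (L - μ / 2) * ‖z - x‖ ^ 2 := by
  have convex_at_z : f z - ⟪f' z, z - x⟫ + μ / 2 * ‖z - x‖ ^ 2 ≤ f x := by
    have h := hf z x
    rwa [← neg_sub z x, inner_neg_right, norm_neg, ← sub_eq_add_neg] at h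
  have gradient_gap : ⟪f' z, z - x⟫ - ⟪f' x, z - x⟫ ≤ L * ‖z - x‖ ^ 2 := by
    rw [← inner_sub_left]
    exact real_inner_le_mul_norm_sq (hLip z x)
  linarith

lemma le_inner_sub_of_lipschitz (hf : FirstOrderStrongConvex μ f f') (hμ : 0 ≤ μ)
    (hLip : ∀ x₁ x₂, ‖f' x₁ - f' x₂‖ ≤ L * ‖x₁ - x₂‖) (x y z : E) :
    f z - f y + μ / 4 * ‖z - y‖ ^ 2 - L * ‖z - x‖ ^ 2 ≤ ⟪f' x, z - y⟫ := by
  have lower_at_y : f x + ⟪f' x, y - x⟫ + μ / 2 * ‖y - x‖ ^ 2 ≤ f y := hf x y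
  have upper_at_z : f z ≤ f x + ⟪f' x, z - x⟫ + (L - μ / 2) * ‖z - x‖ ^ 2 :=
    hf.le_add_inner_of_lipschitz hLip x z
  have inner_split : ⟪f' x, z - y⟫ = ⟪f' x, z - x⟫ - ⟪f' x, y - x⟫ := by
    rw [← inner_sub_right, sub_sub_sub_cancel_right]
  have through_x : μ / 4 * ‖z - y‖ ^ 2 ≤ μ / 4 * (2 * (‖z - x‖ ^ 2 + ‖y - x‖ ^ 2)) := by
    gcongr
    exact norm_sub_sq_le_two_mul z y x
  linarith

lemma le_inner_sub_of_lipschitz_anchored (hf : FirstOrderStrongConvex μ f f')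
    (hL : 0 ≤ L) (hμ : 0 ≤ μ) (hLip : ∀ x₁ x₂, ‖f' x₁ - f' x₂‖ ≤ L * ‖x₁ - x₂‖)
    (x y z : E) :
    f z - f y + (μ / 4 - 2 * L) * ‖z - y‖ ^ 2 - 2 * L * ‖x - y‖ ^ 2 ≤ ⟪f' x, z - y⟫ := by
  have through_y : L * ‖z - x‖ ^ 2 ≤ L * (2 * (‖z - y‖ ^ 2 + ‖x - y‖ ^ 2)) := by
    gcongr
    exact norm_sub_sq_le_two_mul z x y
  linarith [hf.le_inner_sub_of_lipschitz hμ hLip x y z]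

lemma le_inner_sum_of_lipschitz_anchored {ι : Type*} {s : Finset ι} {w : ι → ℝ} {f : ι → E → ℝ}
    {f' : ι → E → E} (hf : ∀ k ∈ s, FirstOrderStrongConvex μ (f k) (f' k))
    (hL : 0 ≤ L) (hμ : 0 ≤ μ)
    (hLip : ∀ k ∈ s, ∀ x₁ x₂, ‖f' k x₁ - f' k x₂‖ ≤ L * ‖x₁ - x₂‖)
    (hw : ∀ k ∈ s, 0 ≤ w k) (x : ι → E) (y z : E) :
    ∑ k ∈ s, w k * f k z - ∑ k ∈ s, w k * f k y
        + (∑ k ∈ s, w k) * ((μ / 4 - 2 * L) * ‖z - y‖ ^ 2)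
        - 2 * L * ∑ k ∈ s, w k * ‖x k - y‖ ^ 2
      ≤ ⟪∑ k ∈ s, w k • f' k (x k), z - y⟫ :=
  calc
    _ = ∑ k ∈ s, w k * (f k z - f k y + (μ / 4 - 2 * L) * ‖z - y‖ ^ 2
          - 2 * L * ‖x k - y‖ ^ 2) := by
      simp only [Finset.mul_sum, Finset.sum_mul, ← Finset.sum_sub_distrib,
        ← Finset.sum_add_distrib]
      exact Finset.sum_congr rfl fun k _ => by ring
    _ ≤ ∑ k ∈ s, w k * ⟪f' k (x k), z - y⟫ :=
      Finset.sum_le_sum fun k hk => mul_le_mul_of_nonneg_left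
        ((hf k hk).le_inner_sub_of_lipschitz_anchored hL hμ (hLip k hk) (x k) y z) (hw k hk)
    _ = ⟪∑ k ∈ s, w k • f' k (x k), z - y⟫ := by
      simp only [sum_inner, real_inner_smul_left]

end FirstOrderStrongConvex

end

/-- Lower bound on the term T₂ in Lemma A.5: for the aggregated update
`d = (1/J) Σᵢ Σⱼ λᵢ ∇fᵢ(v_{i,j})` of `μ`-strongly convex, `L`-smooth local objectives,
`⟪d, x⁺ − x_r⟫ ≥ Σᵢ λᵢ fᵢ(x⁺) − Σᵢ λᵢ fᵢ(x_r) + (μ/4 − 2L)‖x⁺ − x_r‖² − 2L·ℰ`. -/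
theorem T2_lower_bound
    {E : Type*} [NormedAddCommGroup E] [InnerProductSpace ℝ E]
    (N : ℕ) (f : Fin N → E → ℝ) (f' : Fin N → E → E) (L μ : ℝ)
    (hL : 0 ≤ L) (hμ : 0 ≤ μ)
    (hdiff : ∀ i (y : E),
      HasFDerivAt (f i) (InnerProductSpace.toDualMap ℝ E (f' i y) : E →L[ℝ] ℝ) y)
    (hLip : ∀ i (x₁ x₂ : E), ‖f' i x₁ - f' i x₂‖ ≤ L * ‖x₁ - x₂‖)
    (hsc : ∀ i (a b : E), f i b ≥ f i a + ⟪f' i a, b - a⟫ + μ / 2 * ‖b - a‖ ^ 2)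
    (lam : Fin N → ℝ) (hlam0 : ∀ i, 0 ≤ lam i) (hlam1 : ∑ i, lam i = 1)
    (xr xplus : E) (J : ℕ) (hJ : 1 ≤ J) (v : Fin N → Fin J → E)
    (d : E) (hd : d = (1 / (J : ℝ)) • ∑ i, ∑ j, lam i • f' i (v i j))
    (ℰ : ℝ) (hE : ℰ = (1 / (J : ℝ)) * ∑ i, ∑ j, lam i * ‖v i j - xr‖ ^ 2) :
    ⟪d, xplus - xr⟫ ≥ (∑ i, lam i * f i xplus) - (∑ i, lam i * f i xr)
      + (μ / 4 - 2 * L) * ‖xplus - xr‖ ^ 2 - 2 * L * ℰ := by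
  have : NeZero J := ⟨Nat.one_le_iff_ne_zero.mp hJ⟩
  let w : Fin N × Fin J → ℝ := fun p => lam p.1 / J
  have weighted_average (b : Fin N → ℝ) : ∑ p, w p * b p.1 = ∑ i, lam i * b i := by
    simpa only [Fintype.card_fin] using sum_prod_div_card_mul (κ := Fin J) lam b
  have weights_sum : ∑ p, w p = 1 := by
    simpa only [Pi.one_apply, mul_one, hlam1] using weighted_average 1
  have update_eq : d = ∑ p, w p • f' p.1 (v p.1 p.2) := by
    simp only [hd, w, Fintype.sum_prod_type, Finset.smul_sum, smul_smul, one_div_mul_eq_div]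
  have drift_eq : ℰ = ∑ p, w p * ‖v p.1 p.2 - xr‖ ^ 2 := by
    simp only [hE, w, Fintype.sum_prod_type, Finset.mul_sum, ← mul_assoc, one_div_mul_eq_div]
  have weighted_bound := FirstOrderStrongConvex.le_inner_sum_of_lipschitz_anchored
    (s := Finset.univ) (w := w) (fun p _ => hsc p.1) hL hμ (fun p _ => hLip p.1)
    (fun p _ => div_nonneg (hlam0 p.1) J.cast_nonneg) (fun p => v p.1 p.2) xr xplus
  rwa [weighted_average (f · xplus), weighted_average (f · xr), weights_sum, one_mul, ← update_eq,
    ← drift_eq] at weighted_bound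
end

section
/- Let μ > 0, τ₀ > 0, γ₀ > 0 with μ·τ₀ ≤ 1. Define sequences by γ(0) = γ₀, τ_r = τ₀·√(γ₀/γ_r), γ_{r+1} = γ_r·(1 + μ·τ_r), and σ_r = γ_r·τ_r. Then every γ_r is positive, and for all r ∈ ℕ: (i) γ_r ≥ (μ²·τ₀²·γ₀/9)·r²; (ii) σ_r = τ₀·√(γ₀·γ_r), and hence σ_r ≥ (μ·τ₀²·γ₀/3)·r; (iii) τ_r·σ_r = τ₀²·γ₀; (iv) τ_r/σ_r = 1/γ_r. -/
/-!
Since `γ_r τ_r = τ₀ √(γ₀ γ_r)`, the recursion reads `γ_{r+1} = γ_r + μ τ₀ √(γ₀ γ_r)`. Its right-hand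
side increases `√γ_r` by an amount that grows with `γ_r`, so every step increases `√γ_r` at least as
much as the first one, which takes `√γ₀` to `√γ₀ √(1 + μ τ₀)`. Hence `√γ_r` grows at least linearly
in `r`, with slope `√γ₀ (√(1 + μ τ₀) - 1)`; this slope is at least `√γ₀ μ τ₀ / 3` if `μ τ₀ ≤ 3`.
-/

theorem mul_sqrt_div {y : ℝ} (x : ℝ) (hy : 0 ≤ y) : y * √(x / y) = √(x * y) := by
  rcases hy.eq_or_lt with rfl | hy_pos
  · simp
  · calc y * √(x / y) = √(y ^ 2 * (x / y)) := by
          rw [Real.sqrt_mul (sq_nonneg y), Real.sqrt_sq hy]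
      _ = √(x * y) := by congr 1; field_simp

theorem div_three_le_sqrt_one_add_sub_one {a : ℝ} (ha : 0 ≤ a) (ha_le : a ≤ 3) :
    a / 3 ≤ √(1 + a) - 1 := by
  have hsqrt : 1 + a / 3 ≤ √(1 + a) := Real.le_sqrt_of_sq_le (by nlinarith)
  linarith

theorem pos_of_succ_eq_mul {R : Type*} [Semiring R] [PartialOrder R] [IsStrictOrderedRing R]
    {g q : ℕ → R} (h_zero : 0 < g 0) (hq : ∀ r, 0 < q r) (h_succ : ∀ r, g (r + 1) = g r * q r)
    (r : ℕ) : 0 < g r := by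
  induction r with
  | zero => exact h_zero
  | succ r ih =>
    rw [h_succ]
    exact mul_pos ih (hq r)

theorem sqrt_add_mul_sqrt_le_sqrt_add_mul_sqrt_mul {a x y : ℝ} (ha : -1 ≤ a) (hx : 0 ≤ x)
    (hxy : x ≤ y) : √y + (√(1 + a) - 1) * √x ≤ √(y + a * √(x * y)) := by
  set δ := √(1 + a) - 1 with hδ
  have ha_eq : a = 2 * δ + δ ^ 2 := by
    have hsq : √(1 + a) ^ 2 = 1 + a := Real.sq_sqrt (by linarith)
    rw [hδ]
    linarith
  have hx_le : √x ^ 2 ≤ √x * √y := by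
    rw [sq]
    gcongr
  apply Real.le_sqrt_of_sq_le
  calc (√y + δ * √x) ^ 2 = √y ^ 2 + 2 * δ * (√x * √y) + δ ^ 2 * √x ^ 2 := by ring
    _ ≤ √y ^ 2 + 2 * δ * (√x * √y) + δ ^ 2 * (√x * √y) := by gcongr
    _ = y + a * √(x * y) := by
      rw [Real.sq_sqrt (hx.trans hxy), Real.sqrt_mul hx, ha_eq]
      ring

theorem sqrt_mul_one_add_le_sqrt_of_succ_eq_add {a : ℝ} {g : ℕ → ℝ} (ha : 0 ≤ a)
    (h_zero : 0 ≤ g 0) (h_succ : ∀ r, g (r + 1) = g r + a * √(g 0 * g r)) (r : ℕ) :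
    √(g 0) * (1 + (√(1 + a) - 1) * r) ≤ √(g r) := by
  have h_mono : Monotone g := monotone_nat_of_le_succ fun r ↦ by
    rw [h_succ]
    exact le_add_of_nonneg_right (by positivity)
  induction r with
  | zero => simp
  | succ r ih =>
    calc √(g 0) * (1 + (√(1 + a) - 1) * (r + 1 : ℕ))
        = √(g 0) * (1 + (√(1 + a) - 1) * r) + (√(1 + a) - 1) * √(g 0) := by push_cast; ring
      _ ≤ √(g r) + (√(1 + a) - 1) * √(g 0) := by gcongr
      _ ≤ √(g r + a * √(g 0 * g r)) :=
        sqrt_add_mul_sqrt_le_sqrt_add_mul_sqrt_mul (by linarith) h_zero (h_mono r.zero_le)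
      _ = √(g (r + 1)) := by rw [h_succ]

theorem scc_stepsize_growth_general
    (μ τ₀ γ₀ : ℝ) (hμ : 0 ≤ μ) (hτ₀ : 0 < τ₀) (hγ₀ : 0 < γ₀)
    (γ τ σ : ℕ → ℝ) (hγ0 : γ 0 = γ₀)
    (hτ : ∀ r, τ r = τ₀ * √(γ₀ / γ r))
    (hγrec : ∀ r, γ (r + 1) = γ r * (1 + μ * τ r))
    (hσ : ∀ r, σ r = γ r * τ r) (r : ℕ) :
    0 < γ r
      ∧ γ₀ * (1 + (√(1 + μ * τ₀) - 1) * r) ^ 2 ≤ γ r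
      ∧ σ r = τ₀ * √(γ₀ * γ r)
      ∧ τ₀ * γ₀ * (1 + (√(1 + μ * τ₀) - 1) * r) ≤ σ r
      ∧ τ r * σ r = τ₀ ^ 2 * γ₀
      ∧ τ r / σ r = 1 / γ r := by
  subst hγ0
  have hτ_nonneg (r) : 0 ≤ τ r := by rw [hτ]; positivity
  have hγ_pos : ∀ r, 0 < γ r :=
    pos_of_succ_eq_mul hγ₀ (fun r ↦ add_pos_of_pos_of_nonneg one_pos (mul_nonneg hμ (hτ_nonneg r)))
      hγrec
  have hσ_sqrt (r) : σ r = τ₀ * √(γ 0 * γ r) := by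
    rw [hσ, hτ, mul_left_comm, mul_sqrt_div _ (hγ_pos r).le]
  have hγ_succ (r) : γ (r + 1) = γ r + μ * τ₀ * √(γ 0 * γ r) := by
    rw [hγrec, mul_assoc μ, ← hσ_sqrt, hσ]
    ring
  have h_growth := sqrt_mul_one_add_le_sqrt_of_succ_eq_add (by positivity) hγ₀.le hγ_succ r
  have h_slope : 0 ≤ √(1 + μ * τ₀) - 1 :=
    sub_nonneg.2 (Real.one_le_sqrt.2 (le_add_of_nonneg_right (by positivity)))
  have hγr := hγ_pos r
  refine ⟨hγr, ?_, hσ_sqrt r, ?_, ?_, ?_⟩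
  · calc γ 0 * (1 + (√(1 + μ * τ₀) - 1) * r) ^ 2
        = (√(γ 0) * (1 + (√(1 + μ * τ₀) - 1) * r)) ^ 2 := by rw [mul_pow, Real.sq_sqrt hγ₀.le]
      _ ≤ γ r := (Real.le_sqrt (by positivity) hγr.le).1 h_growth
  · calc τ₀ * γ 0 * (1 + (√(1 + μ * τ₀) - 1) * r)
        = τ₀ * (√(γ 0) * (√(γ 0) * (1 + (√(1 + μ * τ₀) - 1) * r))) := by
          rw [← mul_assoc √(γ 0), Real.mul_self_sqrt hγ₀.le, mul_assoc]
      _ ≤ τ₀ * (√(γ 0) * √(γ r)) := by gcongr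
      _ = σ r := by rw [hσ_sqrt, Real.sqrt_mul hγ₀.le]
  · rw [hσ, mul_left_comm, ← sq, hτ, mul_pow, Real.sq_sqrt (by positivity)]
    field_simp
  · have hτ_pos : 0 < τ r := by rw [hτ]; positivity
    rw [hσ]
    field_simp

/-- Lemma A.7: for the step-size recursion `γ₀ > 0`, `τ_r = τ₀√(γ₀/γ_r)`,
`γ_{r+1} = γ_r(1 + μ τ_r)`, `σ_r = γ_r τ_r`, with `μ τ₀ ≤ 1`, every `γ_r` is positive and
(i) `γ_r ≥ (μ²τ₀²γ₀/9) r²`, (ii) `σ_r = τ₀√(γ₀ γ_r)` hence `σ_r ≥ (μτ₀²γ₀/3) r`,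
(iii) `τ_r σ_r = τ₀² γ₀`, (iv) `τ_r/σ_r = 1/γ_r`. -/
theorem scc_stepsize_growth
    (μ τ₀ γ₀ : ℝ) (hμ : 0 < μ) (hτ₀ : 0 < τ₀) (hγ₀ : 0 < γ₀) (hμτ : μ * τ₀ ≤ 1)
    (γ τ σ : ℕ → ℝ) (hγ0 : γ 0 = γ₀)
    (hτ : ∀ r, τ r = τ₀ * Real.sqrt (γ₀ / γ r))
    (hγrec : ∀ r, γ (r + 1) = γ r * (1 + μ * τ r))
    (hσ : ∀ r, σ r = γ r * τ r) :
    ∀ r : ℕ,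
      0 < γ r
      ∧ γ r ≥ μ ^ 2 * τ₀ ^ 2 * γ₀ / 9 * (r : ℝ) ^ 2
      ∧ σ r = τ₀ * Real.sqrt (γ₀ * γ r)
      ∧ σ r ≥ μ * τ₀ ^ 2 * γ₀ / 3 * (r : ℝ)
      ∧ τ r * σ r = τ₀ ^ 2 * γ₀
      ∧ τ r / σ r = 1 / γ r := by
  intro r
  obtain ⟨hγ_pos, hγ_ge, hσ_eq, hσ_ge, h_mul, h_div⟩ :=
    scc_stepsize_growth_general μ τ₀ γ₀ hμ.le hτ₀ hγ₀ γ τ σ hγ0 hτ hγrec hσ r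
  have h_linear : μ * τ₀ / 3 * r ≤ 1 + (√(1 + μ * τ₀) - 1) * r :=
    calc μ * τ₀ / 3 * r ≤ (√(1 + μ * τ₀) - 1) * r := by
          gcongr
          exact div_three_le_sqrt_one_add_sub_one (by positivity) (by linarith)
      _ ≤ 1 + (√(1 + μ * τ₀) - 1) * r := le_add_of_nonneg_left zero_le_one
  refine ⟨hγ_pos, ?_, hσ_eq, ?_, h_mul, h_div⟩
  · calc μ ^ 2 * τ₀ ^ 2 * γ₀ / 9 * (r : ℝ) ^ 2 = γ₀ * (μ * τ₀ / 3 * r) ^ 2 := by ring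
      _ ≤ γ₀ * (1 + (√(1 + μ * τ₀) - 1) * r) ^ 2 := by gcongr
      _ ≤ γ r := hγ_ge
  · calc μ * τ₀ ^ 2 * γ₀ / 3 * (r : ℝ) = τ₀ * γ₀ * (μ * τ₀ / 3 * r) := by ring
      _ ≤ τ₀ * γ₀ * (1 + (√(1 + μ * τ₀) - 1) * r) := by gcongr
      _ ≤ σ r := hσ_ge
end

section
/- Let E be a real inner product space and let f₁, …, f_N : E → ℝ be differentiable functions whose gradients ∇f_i are all L-Lipschitz (L > 0). Let λ ∈ ℝ^N satisfy λ_i ≥ 0 for all i and Σ_{i=1}^N λ_i = 1. Let x ∈ E and set c = Σ_{i=1}^N λ_i ∇f_i(x). Let J ≥ 2 be an integer, η > 0, η_g ≥ 1, τ = J·η·η_g, and assume both 4τ²L²/(η_g²·J) ≤ 1/(J−1) and 48·τ·L + 2·(τ·L)² ≤ η_g²/16. For each i define u_{i,0} = x and u_{i,j} = u_{i,j−1} − η·(∇f_i(u_{i,j−1}) − ∇f_i(x) + c) for j = 1, …, J. Define d = (1/J)·Σ_{i=1}^N Σ_{j=1}^J λ_i ∇f_i(u_{i,j−1}) and ℰ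 = (1/J)·Σ_{i=1}^N Σ_{j=1}^J λ_i ‖u_{i,j−1} − x‖². Then 3·L·ℰ ≤ (τ/8)·‖d‖². -/
open scoped RealInnerProductSpace

/-!
Each bias-corrected step moves a client by at most `η (L ‖u - x‖ + ‖c‖)`, so when `2JηL ≤ 1` the
local iterates stay within `2Jη‖c‖` of `x`. The aggregated update `d` is an average of gradients
taken at these iterates, hence `‖d - c‖ ≤ L · 2Jη‖c‖`, which is at most `‖c‖ / 2` when `4JηL ≤ 1`;
then `‖c‖ ≤ 2‖d‖`. The drift is therefore at most `(4Jη‖d‖)²`, and a small step size makes this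
quadratic quantity absorbable into `(τ / 8) ‖d‖²`.
-/

theorem le_two_mul_of_affine_recursion {a : ℕ → ℝ} {q b : ℝ} {J : ℕ} (hq : 0 ≤ q) (hb : 0 ≤ b)
    (hqJ : 2 * (J * q) ≤ 1) (ha₀ : a 0 ≤ 0) (ha : ∀ j < J, a (j + 1) ≤ (1 + q) * a j + b) :
    ∀ j ≤ J, a j ≤ 2 * (j * b) := by
  intro j hj
  induction j with
  | zero => simpa using ha₀
  | succ j ih =>
    have hjq : 2 * (j * q) ≤ 1 := by
      have hjJ : (j : ℝ) ≤ J := by exact_mod_cast (Nat.lt_of_succ_le hj).le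
      exact le_trans (by gcongr) hqJ
    calc a (j + 1) ≤ (1 + q) * a j + b := ha j hj
      _ ≤ (1 + q) * (2 * (j * b)) + b := by gcongr; exact ih (Nat.le_of_succ_le hj)
      _ = 2 * (j * b) + 2 * (j * q) * b + b := by ring
      _ ≤ 2 * (j * b) + 1 * b + b := by gcongr
      _ = 2 * ((j + 1 : ℕ) * b) := by push_cast; ring

section LocalSteps

variable {E : Type*} [SeminormedAddCommGroup E] [NormedSpace ℝ E]
  {G : E → E} {L η : ℝ} {x c : E} {J : ℕ}

theorem norm_biasCorrectedStep_sub_le (hη : 0 ≤ η) {y : E} (hG : ‖G y - G x‖ ≤ L * ‖y - x‖) :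
    ‖y - η • (G y - G x + c) - x‖ ≤ (1 + η * L) * ‖y - x‖ + η * ‖c‖ :=
  calc ‖y - η • (G y - G x + c) - x‖ = ‖(y - x) - η • (G y - G x + c)‖ := by rw [sub_right_comm]
    _ ≤ ‖y - x‖ + η * ‖G y - G x + c‖ := by
      simpa only [norm_smul, Real.norm_of_nonneg hη] using
        norm_sub_le (y - x) (η • (G y - G x + c))
    _ ≤ ‖y - x‖ + η * (L * ‖y - x‖ + ‖c‖) := by
      gcongr
      exact (norm_add_le _ _).trans (by gcongr)
    _ = (1 + η * L) * ‖y - x‖ + η * ‖c‖ := by ring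

theorem norm_localIterate_sub_le (hL : 0 ≤ L) (hη : 0 ≤ η)
    (hG : ∀ y, ‖G y - G x‖ ≤ L * ‖y - x‖) (hstep : 2 * (J * (η * L)) ≤ 1)
    {u : ℕ → E} (hu₀ : u 0 = x) (hu : ∀ j < J, u (j + 1) = u j - η • (G (u j) - G x + c))
    {j : ℕ} (hj : j ≤ J) :
    ‖u j - x‖ ≤ 2 * (J * (η * ‖c‖)) := by
  have hstep_le : ∀ j < J, ‖u (j + 1) - x‖ ≤ (1 + η * L) * ‖u j - x‖ + η * ‖c‖ := fun j hj ↦ by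
    rw [hu j hj]
    exact norm_biasCorrectedStep_sub_le hη (hG _)
  calc ‖u j - x‖ ≤ 2 * (j * (η * ‖c‖)) :=
      le_two_mul_of_affine_recursion (a := fun j ↦ ‖u j - x‖) (by positivity) (by positivity)
        hstep (by simp [hu₀]) hstep_le j hj
    _ ≤ 2 * (J * (η * ‖c‖)) := by gcongr

end LocalSteps

section MixtureAverage

variable {ι F : Type*} [Fintype ι] {lam : ι → ℝ} {J : ℕ}

/-- The average of `v i j` over clients `i` with mixture weights `lam i` and uniformly over the
local steps `j = 0, …, J - 1`. Both the aggregated update `d` (vector-valued) and the client drift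
`ℰ` (real-valued) are of this form. For `J = 0` it is `0`. -/
noncomputable def mixtureAverage [AddCommMonoid F] [Module ℝ F] (lam : ι → ℝ) (J : ℕ)
    (v : ι → ℕ → F) : F :=
  (1 / (J : ℝ)) • ∑ i, ∑ j ∈ Finset.range J, lam i • v i j

theorem mixtureAverage_sub [AddCommGroup F] [Module ℝ F] (v w : ι → ℕ → F) :
    mixtureAverage lam J (fun i j ↦ v i j - w i j) =
      mixtureAverage lam J v - mixtureAverage lam J w := by
  simp only [mixtureAverage, smul_sub, Finset.sum_sub_distrib]

theorem mixtureAverage_of_step_independent [AddCommMonoid F] [Module ℝ F] (hJ : J ≠ 0)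
    (v : ι → F) :
    mixtureAverage lam J (fun i _ ↦ v i) = ∑ i, lam i • v i := by
  have hJ' : (J : ℝ) ≠ 0 := Nat.cast_ne_zero.mpr hJ
  simp only [mixtureAverage, Finset.sum_const, Finset.card_range, ← Nat.cast_smul_eq_nsmul ℝ]
  rw [← Finset.smul_sum, smul_smul, one_div_mul_cancel hJ', one_smul]

theorem norm_mixtureAverage_le [SeminormedAddCommGroup F] [NormedSpace ℝ F]
    (hlam : lam ∈ stdSimplex ℝ ι) (hJ : J ≠ 0) {v : ι → ℕ → F} {B : ℝ}
    (hv : ∀ i, ∀ j < J, ‖v i j‖ ≤ B) :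
    ‖mixtureAverage lam J v‖ ≤ B := by
  have norm_term_le : ∀ i, ∀ j ∈ Finset.range J, ‖lam i • v i j‖ ≤ lam i • B := fun i j hj ↦ by
    rw [norm_smul, Real.norm_of_nonneg (hlam.1 i), smul_eq_mul]
    exact mul_le_mul_of_nonneg_left (hv i j (Finset.mem_range.mp hj)) (hlam.1 i)
  calc ‖mixtureAverage lam J v‖
      = (1 / (J : ℝ)) * ‖∑ i, ∑ j ∈ Finset.range J, lam i • v i j‖ := by
        rw [mixtureAverage, norm_smul, Real.norm_of_nonneg (by positivity)]
    _ ≤ mixtureAverage lam J (fun _ _ ↦ B) := by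
        rw [mixtureAverage, smul_eq_mul]
        gcongr
        exact norm_sum_le_of_le _ fun i _ ↦ norm_sum_le_of_le _ (norm_term_le i)
    _ = B := by
        rw [mixtureAverage_of_step_independent hJ, ← Finset.sum_smul, hlam.2, one_smul]

end MixtureAverage

section Drift

variable {ι E : Type*} [Fintype ι] [SeminormedAddCommGroup E] [NormedSpace ℝ E]
  {G : ι → E → E} {L η : ℝ} {lam : ι → ℝ} {x c : E} {J : ℕ} {u : ι → ℕ → E}

theorem norm_mixtureAverage_sub_le_of_lipschitz (hL : 0 ≤ L)
    (hG : ∀ i y, ‖G i y - G i x‖ ≤ L * ‖y - x‖) (hlam : lam ∈ stdSimplex ℝ ι) (hJ : J ≠ 0)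
    {R : ℝ} (hu : ∀ i, ∀ j < J, ‖u i j - x‖ ≤ R) :
    ‖mixtureAverage lam J (fun i j ↦ G i (u i j)) - ∑ i, lam i • G i x‖ ≤ L * R := by
  rw [← mixtureAverage_of_step_independent hJ, ← mixtureAverage_sub]
  refine norm_mixtureAverage_le hlam hJ fun i j hj ↦ (hG i (u i j)).trans ?_
  gcongr
  exact hu i j hj

theorem drift_le_sq_norm_update (hL : 0 ≤ L) (hG : ∀ i y, ‖G i y - G i x‖ ≤ L * ‖y - x‖)
    (hlam : lam ∈ stdSimplex ℝ ι) (hc : c = ∑ i, lam i • G i x) (hJ : J ≠ 0) (hη : 0 ≤ η)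
    (hstep : 4 * (J * (η * L)) ≤ 1) (hu₀ : ∀ i, u i 0 = x)
    (hu : ∀ i, ∀ j < J, u i (j + 1) = u i j - η • (G i (u i j) - G i x + c)) :
    mixtureAverage lam J (fun i j ↦ ‖u i j - x‖ ^ 2) ≤
      (4 * (J * η) * ‖mixtureAverage lam J fun i j ↦ G i (u i j)‖) ^ 2 := by
  set d := mixtureAverage lam J fun i j ↦ G i (u i j)
  have iterate_near : ∀ i, ∀ j < J, ‖u i j - x‖ ≤ 2 * (J * (η * ‖c‖)) := fun i j hj ↦
    norm_localIterate_sub_le hL hη (hG i) (by linarith [show 0 ≤ J * (η * L) by positivity])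
      (hu₀ i) (hu i) hj.le
  have update_near : ‖d - c‖ ≤ ‖c‖ / 2 :=
    calc ‖d - c‖ ≤ L * (2 * (J * (η * ‖c‖))) :=
        hc ▸ norm_mixtureAverage_sub_le_of_lipschitz hL hG hlam hJ (hc ▸ iterate_near)
      _ = 4 * (J * (η * L)) * (‖c‖ / 2) := by ring
      _ ≤ ‖c‖ / 2 := mul_le_of_le_one_left (by positivity) hstep
  have control_le_update : ‖c‖ ≤ 2 * ‖d‖ := by linarith [norm_le_norm_add_norm_sub d c]
  calc mixtureAverage lam J (fun i j ↦ ‖u i j - x‖ ^ 2) ≤ (2 * (J * (η * ‖c‖))) ^ 2 := by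
        refine (Real.le_norm_self _).trans (norm_mixtureAverage_le hlam hJ fun i j hj ↦ ?_)
        rw [norm_pow, norm_norm]
        gcongr
        exact iterate_near i j hj
    _ ≤ (2 * (J * (η * (2 * ‖d‖)))) ^ 2 := by gcongr
    _ = (4 * (J * η) * ‖d‖) ^ 2 := by ring

theorem drift_control_general (hL : 0 ≤ L) (hG : ∀ i y, ‖G i y - G i x‖ ≤ L * ‖y - x‖)
    (hlam : lam ∈ stdSimplex ℝ ι) (hc : c = ∑ i, lam i • G i x) (hJ : J ≠ 0) (hη : 0 ≤ η)
    {ηg τ : ℝ} (hηg : 0 < ηg) (hτ : τ = J * η * ηg)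
    (hτL_le : 4 * (τ * L) ≤ ηg) (hτL_le_sq : 384 * (τ * L) ≤ ηg ^ 2)
    (hu₀ : ∀ i, u i 0 = x)
    (hu : ∀ i, ∀ j < J, u i (j + 1) = u i j - η • (G i (u i j) - G i x + c)) :
    3 * L * mixtureAverage lam J (fun i j ↦ ‖u i j - x‖ ^ 2) ≤
      τ / 8 * ‖mixtureAverage lam J fun i j ↦ G i (u i j)‖ ^ 2 := by
  set d := mixtureAverage lam J fun i j ↦ G i (u i j)
  have hτL : τ * L = J * (η * L) * ηg := by rw [hτ]; ring
  have local_step_small : 4 * (J * (η * L)) ≤ 1 :=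
    le_of_mul_le_mul_right (by linarith) hηg
  have local_step_le_global : 384 * (J * (η * L)) ≤ ηg :=
    le_of_mul_le_mul_right (by linarith) hηg
  calc 3 * L * mixtureAverage lam J (fun i j ↦ ‖u i j - x‖ ^ 2)
      ≤ 3 * L * (4 * (J * η) * ‖d‖) ^ 2 := by
        gcongr
        exact drift_le_sq_norm_update hL hG hlam hc hJ hη local_step_small hu₀ hu
    _ = 384 * (J * (η * L)) * (J * η / 8 * ‖d‖ ^ 2) := by ring
    _ ≤ ηg * (J * η / 8 * ‖d‖ ^ 2) := by gcongr
    _ = τ / 8 * ‖d‖ ^ 2 := by rw [hτ]; ring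

end Drift

theorem four_mul_le_and_mul_le_sq_of_stepSize {t g : ℝ} (ht : 0 ≤ t) (hg : 0 ≤ g)
    (h : 48 * t + 2 * t ^ 2 ≤ g ^ 2 / 16) : 4 * t ≤ g ∧ 384 * t ≤ g ^ 2 :=
  ⟨le_of_sq_le_sq (by linarith [sq_nonneg t]) hg, by linarith [sq_nonneg t]⟩

/-- Drift-control step (the bound T₄ ≤ 0 in Lemma B.1, deterministic gradients):
with weights `λ` in the simplex, control variate `c = Σᵢ λᵢ ∇fᵢ(x)`, effective step size
`τ = J·η·η_g`, and the step-size conditions `4τ²L²/(η_g²J) ≤ 1/(J−1)` and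
`48τL + 2(τL)² ≤ η_g²/16`, the drift `ℰ` of the bias-corrected local iterates and the
aggregated update `d = (1/J) Σᵢ Σ_{j=1}^J λᵢ ∇fᵢ(u_{i,j−1})` satisfy
`3Lℰ ≤ (τ/8)‖d‖²`. -/
theorem drift_control
    {E : Type*} [NormedAddCommGroup E] [InnerProductSpace ℝ E]
    (N : ℕ) (f : Fin N → E → ℝ) (f' : Fin N → E → E) (L : ℝ) (hL : 0 < L)
    (hdiff : ∀ i (y : E),
      HasFDerivAt (f i) (InnerProductSpace.toDualMap ℝ E (f' i y) : E →L[ℝ] ℝ) y)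
    (hLip : ∀ i (x₁ x₂ : E), ‖f' i x₁ - f' i x₂‖ ≤ L * ‖x₁ - x₂‖)
    (lam : Fin N → ℝ) (hlam0 : ∀ i, 0 ≤ lam i) (hlam1 : ∑ i, lam i = 1)
    (x c : E) (hc : c = ∑ i, lam i • f' i x)
    (J : ℕ) (hJ : 2 ≤ J) (η ηg τ : ℝ)
    (hη : 0 < η) (hηg : 1 ≤ ηg) (hτ : τ = J * η * ηg)
    (hstep₁ : 4 * τ ^ 2 * L ^ 2 / (ηg ^ 2 * J) ≤ 1 / ((J : ℝ) - 1))
    (hstep₂ : 48 * τ * L + 2 * (τ * L) ^ 2 ≤ ηg ^ 2 / 16)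
    (u : Fin N → ℕ → E) (hu0 : ∀ i, u i 0 = x)
    (hrec : ∀ i, ∀ j < J, u i (j + 1) = u i j - η • (f' i (u i j) - f' i x + c))
    (d : E) (hd : d = (1 / (J : ℝ)) • ∑ i, ∑ j ∈ Finset.range J, lam i • f' i (u i j))
    (ℰ : ℝ)
    (hE : ℰ = (1 / (J : ℝ)) * ∑ i, ∑ j ∈ Finset.range J, lam i * ‖u i j - x‖ ^ 2) :
    3 * L * ℰ ≤ τ / 8 * ‖d‖ ^ 2 := by
  obtain ⟨hτL_le, hτL_le_sq⟩ := four_mul_le_and_mul_le_sq_of_stepSize (t := τ * L)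
    (by rw [hτ]; positivity) (zero_le_one.trans hηg) (by rwa [← mul_assoc])
  subst hd hE
  exact drift_control_general hL.le (fun i y ↦ hLip i y x) ⟨hlam0, hlam1⟩ hc (by omega) hη.le
    (by linarith) hτ hτL_le hτL_le_sq hu0 hrec
end
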